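/- arXiv:2411.06541 — 2 statements merged into one kernel-verified Lean document; each statement's English description precedes it below -/
import Mathlib

section
/- Fix integers q ≥ 3 and d ≥ 2, a real β ≥ 1, and a symmetric interaction matrix A ∈ ℝ_{≥0}^{q×q} satisfying: (a) A ≥ 1_q 1_q^T entrywise with strict inequality in at least one entry; (b) |𝓜(d,A)| ≥ 2 and there exist c ∈ [q] and a₁, a₂ ∈ 𝓜(d,A) with A_{c,a₁} ≠ A_{c,a₂}. Let B = B(β,A). Then the set 𝓕^{prod}_{B,d} := { F_{B,d}(ν) : ν a product probability measure on ([q] ∪ {c*})^d } is not a convex subset of the simplex Δ_{q+1}; in particular it is strictly contained in 𝓕_{B,d} := { F_{B,d}(μ) : μ an arbitrary probability measure on ([q] ∪ {c*})^d }. -/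
open scoped BigOperators Classical
open MeasureTheory

/-- A probability distribution on a finite type, represented as a nonnegative
function summing to one. -/
def IsProbDist {ι : Type*} [Fintype ι] (μ : ι → ℝ) : Prop :=
  (∀ x, 0 ≤ μ x) ∧ ∑ x, μ x = 1

/-- The unnormalized belief propagation functional `G_c(μ) = E_{τ∼μ}[∏ i, A c (τ i)]`. -/
noncomputable def Gfun {q d : ℕ} (A : Matrix (Fin q) (Fin q) ℝ)
    (μ : (Fin d → Fin q) → ℝ) (c : Fin q) : ℝ :=
  ∑ σ : Fin d → Fin q, μ σ * ∏ i, A c (σ i)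

/-- The belief propagation functional `F_{A,d,c}(μ) = G_c(μ) / ∑ b, G_b(μ)`. -/
noncomputable def Ffun {q d : ℕ} (A : Matrix (Fin q) (Fin q) ℝ)
    (μ : (Fin d → Fin q) → ℝ) (c : Fin q) : ℝ :=
  Gfun A μ c / ∑ b, Gfun A μ b

/-- The product measure on `[k]^d` with marginals `ν i`. -/
noncomputable def prodMeasure {d k : ℕ} (ν : Fin d → Fin k → ℝ) :
    (Fin d → Fin k) → ℝ :=
  fun σ => ∏ i, ν i (σ i)

/-- The point mass `δ_b` at a spin `b`. -/
noncomputable def pointMass {k : ℕ} (b : Fin k) : Fin k → ℝ :=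
  fun c => if c = b then 1 else 0

/-- The marginal of a distribution `μ` on `[k]^d` at coordinate `i`. -/
noncomputable def marg {d k : ℕ} (μ : (Fin d → Fin k) → ℝ) (i : Fin d) : Fin k → ℝ :=
  fun b => ∑ σ : Fin d → Fin k, if σ i = b then μ σ else 0

/-- The tilt `λ ⋆ μ` of a distribution `μ` on `[k]^d` by an external field `λ`. -/
noncomputable def tilt {d k : ℕ} (lam : Fin d → Fin k → ℝ)
    (μ : (Fin d → Fin k) → ℝ) : (Fin d → Fin k) → ℝ :=
  fun σ => (μ σ * ∏ i, lam i (σ i)) / ∑ σ' : Fin d → Fin k, μ σ' * ∏ i, lam i (σ' i)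

/-- The `(q+1) × (q+1)` interaction matrix `B(β,A) = [[β, 1ᵀ],[1, A]]`; the index `0`
plays the role of the special spin `c*`. -/
noncomputable def Bmat {q : ℕ} (β : ℝ) (A : Matrix (Fin q) (Fin q) ℝ) :
    Matrix (Fin (q+1)) (Fin (q+1)) ℝ :=
  Matrix.of fun i j =>
    if hi : i = 0 then (if j = 0 then β else 1)
    else if hj : j = 0 then 1 else A (i.pred hi) (j.pred hj)

/-- `𝓜(d,A) = argmax_{b} ∑ c, A c b ^ d`. -/
def Mset {q : ℕ} (d : ℕ) (A : Matrix (Fin q) (Fin q) ℝ) : Set (Fin q) :=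
  {b | ∀ b', ∑ c, A c b' ^ d ≤ ∑ c, A c b ^ d}

/-- `max_{b ∈ [q]} ∑ c, A c b ^ d` (as a supremum over the finite nonempty type `Fin q`). -/
noncomputable def maxCol {q : ℕ} (d : ℕ) (A : Matrix (Fin q) (Fin q) ℝ) : ℝ :=
  ⨆ b, ∑ c, A c b ^ d

/-!
Rescale each column of `B` so that its entry in a fixed row `r` is one, and call the result `W`.
By AM-GM applied along each row of `W`, the coordinate `r` of `F_B` is smallest at the
configurations constantly equal to some `a ∈ 𝓜(d, W)`, and a measure attaining this minimum is
supported on configurations whose spins all have the same column in `W`. For a product measure this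
forces one column for the whole support (replace a single coordinate of one configuration by that of
another), so its image is that of a constant configuration. Hence the face of `𝓕^{prod}` on which
coordinate `r` is minimal is finite; if two maximizing columns differ it has at least two points, so
it is not convex. The set `𝓕`, in contrast, is a projective image of a simplex, hence convex.
For `B(β, A)` one takes `r = c*`, and the remaining block of `W` is `A`.
-/

section ArithmeticGeometricMean

variable {ι κ : Type*} [Fintype ι] [Nonempty ι] [Fintype κ]

theorem prod_le_sum_pow_card_div_card {x : ι → ℝ} (hx : ∀ i, 0 ≤ x i) :
    ∏ i, x i ≤ (∑ i, x i ^ Fintype.card ι) / Fintype.card ι := by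
  have amgm := Real.geom_mean_le_arith_mean_weighted Finset.univ
    (fun _ : ι => (Fintype.card ι : ℝ)⁻¹) (fun i => x i ^ Fintype.card ι)
    (fun _ _ => by positivity) (by simp) (fun i _ => pow_nonneg (hx i) _)
  simpa [Real.pow_rpow_inv_natCast, hx, ← Finset.mul_sum, div_eq_inv_mul] using amgm

theorem prod_eq_sum_pow_card_div_card_iff {x : ι → ℝ} (hx : ∀ i, 0 ≤ x i) :
    ∏ i, x i = (∑ i, x i ^ Fintype.card ι) / Fintype.card ι ↔ ∀ i j, x i = x j := by
  have amgm := Real.geom_mean_eq_arith_mean_weighted_iff_of_pos Finset.univ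
    (fun _ : ι => (Fintype.card ι : ℝ)⁻¹) (fun i => x i ^ Fintype.card ι)
    (fun _ _ => by positivity) (by simp) (fun i _ => pow_nonneg (hx i) _)
  simpa [Real.pow_rpow_inv_natCast, hx, ← Finset.mul_sum, div_eq_inv_mul,
    pow_left_inj₀] using amgm

theorem sum_sum_pow_card_div_card_le {y : κ → ι → ℝ} {M : ℝ}
    (hM : ∀ i, ∑ c, y c i ^ Fintype.card ι ≤ M) :
    ∑ c, (∑ i, y c i ^ Fintype.card ι) / Fintype.card ι ≤ M := by
  rw [← Finset.sum_div, Finset.sum_comm, div_le_iff₀ (by positivity), mul_comm, ← nsmul_eq_mul]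
  exact Finset.sum_le_card_nsmul _ _ _ fun i _ => hM i

theorem sum_prod_le_of_sum_pow_card_le {y : κ → ι → ℝ} {M : ℝ} (hy : ∀ c i, 0 ≤ y c i)
    (hM : ∀ i, ∑ c, y c i ^ Fintype.card ι ≤ M) : ∑ c, ∏ i, y c i ≤ M :=
  (Finset.sum_le_sum fun c _ => prod_le_sum_pow_card_div_card (hy c)).trans
    (sum_sum_pow_card_div_card_le hM)

theorem eq_of_sum_prod_eq_of_sum_pow_card_le {y : κ → ι → ℝ} {M : ℝ} (hy : ∀ c i, 0 ≤ y c i)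
    (hM : ∀ i, ∑ c, y c i ^ Fintype.card ι ≤ M) (h : ∑ c, ∏ i, y c i = M) (c : κ) (i j : ι) :
    y c i = y c j := by
  have row_le : ∀ c ∈ Finset.univ, ∏ i, y c i ≤ (∑ i, y c i ^ Fintype.card ι) / Fintype.card ι :=
    fun c _ => prod_le_sum_pow_card_div_card (hy c)
  have sum_eq := (Finset.sum_le_sum row_le).antisymm (h ▸ sum_sum_pow_card_div_card_le hM)
  have row_eq := (Finset.sum_eq_sum_iff_of_le row_le).1 sum_eq c (Finset.mem_univ c)
  exact (prod_eq_sum_pow_card_div_card_iff (hy c)).1 row_eq i j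

end ArithmeticGeometricMean

section ProductMeasures

variable {d k : ℕ}

theorem isProbDist_prodMeasure {ν : Fin d → Fin k → ℝ} (hν : ∀ i, IsProbDist (ν i)) :
    IsProbDist (prodMeasure ν) := by
  refine ⟨fun σ => Finset.prod_nonneg fun i _ => (hν i).1 _, ?_⟩
  simp only [prodMeasure, ← Fintype.prod_sum, (hν _).2, Finset.prod_const_one]

theorem isProbDist_pointMass (b : Fin k) : IsProbDist (pointMass b) := by
  refine ⟨fun c => ?_, by simp [pointMass]⟩
  unfold pointMass
  split_ifs <;> norm_num

/-- The law of the configuration in `[k]^d` that is constantly `b`, as a product measure. -/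
noncomputable def monochromatic (d : ℕ) (b : Fin k) : (Fin d → Fin k) → ℝ :=
  prodMeasure fun _ => pointMass b

theorem prodMeasure_update_ne_zero {ν : Fin d → Fin k → ℝ} {σ τ : Fin d → Fin k}
    (hσ : prodMeasure ν σ ≠ 0) (hτ : prodMeasure ν τ ≠ 0) (i : Fin d) :
    prodMeasure ν (Function.update σ i (τ i)) ≠ 0 := by
  simp only [prodMeasure, Finset.prod_ne_zero_iff, Finset.mem_univ, true_imp_iff] at hσ hτ ⊢
  intro j
  rcases eq_or_ne j i with rfl | hji
  · simpa using hτ j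
  · simpa [hji] using hσ j

theorem eq_of_prodMeasure_ne_zero {α : Type*} {f : Fin k → α} {ν : Fin d → Fin k → ℝ} (hd : 2 ≤ d)
    (hf : ∀ σ, prodMeasure ν σ ≠ 0 → ∀ i j, f (σ i) = f (σ j)) {σ τ : Fin d → Fin k}
    (hσ : prodMeasure ν σ ≠ 0) (hτ : prodMeasure ν τ ≠ 0) (i j : Fin d) : f (σ i) = f (τ j) := by
  have : Nontrivial (Fin d) := Fin.nontrivial_iff_two_le.2 hd
  obtain ⟨l, hlj⟩ := exists_ne j
  have mixed := hf _ (prodMeasure_update_ne_zero hσ hτ j) l j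
  rw [Function.update_of_ne hlj, Function.update_self] at mixed
  exact (hf σ hσ i l).trans mixed

end ProductMeasures

section BeliefPropagation

variable {k d : ℕ} {B : Matrix (Fin k) (Fin k) ℝ} {μ : (Fin d → Fin k) → ℝ} {r : Fin k}

theorem Gfun_add (B : Matrix (Fin k) (Fin k) ℝ) (μ₁ μ₂ : (Fin d → Fin k) → ℝ) (c : Fin k) :
    Gfun B (μ₁ + μ₂) c = Gfun B μ₁ c + Gfun B μ₂ c := by
  simp only [Gfun, Pi.add_apply, add_mul, Finset.sum_add_distrib]

theorem Gfun_smul (B : Matrix (Fin k) (Fin k) ℝ) (t : ℝ) (μ : (Fin d → Fin k) → ℝ) (c : Fin k) :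
    Gfun B (t • μ) c = t * Gfun B μ c := by
  simp only [Gfun, Pi.smul_apply, smul_eq_mul, mul_assoc, Finset.mul_sum]

theorem Gfun_prodMeasure (B : Matrix (Fin k) (Fin k) ℝ) (ν : Fin d → Fin k → ℝ) (c : Fin k) :
    Gfun B (prodMeasure ν) c = ∏ i, ∑ j, ν i j * B c j := by
  simp only [Gfun, prodMeasure, Fintype.prod_sum, Finset.prod_mul_distrib]

theorem Gfun_monochromatic (B : Matrix (Fin k) (Fin k) ℝ) (b c : Fin k) :
    Gfun B (monochromatic d b) c = B c b ^ d := by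
  simp [monochromatic, Gfun_prodMeasure, pointMass]

theorem Gfun_of_row_eq_one (hr : ∀ j, B r j = 1) : Gfun B μ r = ∑ σ, μ σ := by
  simp [Gfun, hr]

theorem sum_Gfun (B : Matrix (Fin k) (Fin k) ℝ) (μ : (Fin d → Fin k) → ℝ) :
    ∑ c, Gfun B μ c = ∑ σ, μ σ * ∑ c, ∏ i, B c (σ i) := by
  simp only [Gfun, Finset.mul_sum]
  exact Finset.sum_comm

theorem Gfun_nonneg (hB : ∀ c j, 0 ≤ B c j) (hμ : ∀ σ, 0 ≤ μ σ) (c : Fin k) : 0 ≤ Gfun B μ c :=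
  Finset.sum_nonneg fun σ _ => mul_nonneg (hμ σ) (Finset.prod_nonneg fun i _ => hB c (σ i))

theorem Gfun_pos (hr : ∀ j, 0 < B r j) (hμ : IsProbDist μ) : 0 < Gfun B μ r := by
  have prod_pos : ∀ σ : Fin d → Fin k, 0 < ∏ i, B r (σ i) := fun σ =>
    Finset.prod_pos fun i _ => hr (σ i)
  obtain ⟨σ, -, hσ⟩ : ∃ σ ∈ Finset.univ, 0 < μ σ :=
    Finset.exists_lt_of_sum_lt (by simp [hμ.2])
  exact Finset.sum_pos' (fun τ _ => mul_nonneg (hμ.1 τ) (prod_pos τ).le)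
    ⟨σ, Finset.mem_univ σ, mul_pos hσ (prod_pos σ)⟩

theorem sum_Gfun_pos (hB : ∀ c j, 0 ≤ B c j) (hr : ∀ j, 0 < B r j) (hμ : IsProbDist μ) :
    0 < ∑ c, Gfun B μ c :=
  Finset.sum_pos' (fun c _ => Gfun_nonneg hB hμ.1 c) ⟨r, Finset.mem_univ r, Gfun_pos hr hμ⟩

theorem Ffun_eq_of_Gfun_eq_mul {B' : Matrix (Fin k) (Fin k) ℝ} {μ' : (Fin d → Fin k) → ℝ} {z : ℝ}
    (hz : z ≠ 0) (h : ∀ c, Gfun B μ c = z * Gfun B' μ' c) : Ffun B μ = Ffun B' μ' := by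
  funext c
  simp only [Ffun, h, ← Finset.mul_sum, mul_div_mul_left _ _ hz]

/-- The image `𝓕_{B,d}` of all probability measures on `[k]^d` under belief propagation. -/
def bpImage (d : ℕ) (B : Matrix (Fin k) (Fin k) ℝ) : Set (Fin k → ℝ) :=
  {p | ∃ μ : (Fin d → Fin k) → ℝ, IsProbDist μ ∧ p = Ffun B μ}

/-- The image `𝓕^{prod}_{B,d}` of the product probability measures on `[k]^d` under belief
propagation. -/
def bpProdImage (d : ℕ) (B : Matrix (Fin k) (Fin k) ℝ) : Set (Fin k → ℝ) :=
  {p | ∃ ν : Fin d → Fin k → ℝ, (∀ i, IsProbDist (ν i)) ∧ p = Ffun B (prodMeasure ν)}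

theorem bpProdImage_subset_bpImage (d : ℕ) (B : Matrix (Fin k) (Fin k) ℝ) :
    bpProdImage d B ⊆ bpImage d B := by
  rintro p ⟨ν, hν, rfl⟩
  exact ⟨prodMeasure ν, isProbDist_prodMeasure hν, rfl⟩

theorem Ffun_monochromatic_mem_bpProdImage (B : Matrix (Fin k) (Fin k) ℝ) (b : Fin k) :
    Ffun B (monochromatic d b) ∈ bpProdImage d B :=
  ⟨fun _ => pointMass b, fun _ => isProbDist_pointMass b, rfl⟩

theorem Ffun_mem_bpImage (hμ : ∀ σ, 0 ≤ μ σ) (hsum : 0 < ∑ σ, μ σ) : Ffun B μ ∈ bpImage d B := by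
  refine ⟨(∑ σ, μ σ)⁻¹ • μ, ⟨fun σ => mul_nonneg (by positivity) (hμ σ), ?_⟩, ?_⟩
  · simp only [Pi.smul_apply, smul_eq_mul, ← Finset.mul_sum, inv_mul_cancel₀ hsum.ne']
  · exact (Ffun_eq_of_Gfun_eq_mul (inv_ne_zero hsum.ne') (Gfun_smul B _ μ)).symm

-- Mixing `μ₁` and `μ₂` with weights divided by their normalizing constants mixes `F` linearly.
theorem convex_bpImage (d : ℕ) (hB : ∀ c j, 0 ≤ B c j) (hr : ∀ j, 0 < B r j) :
    Convex ℝ (bpImage d B) := by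
  rintro _ ⟨μ₁, hμ₁, rfl⟩ _ ⟨μ₂, hμ₂, rfl⟩ s t hs ht hst
  have hZ₁ := sum_Gfun_pos hB hr hμ₁
  have hZ₂ := sum_Gfun_pos hB hr hμ₂
  set Z₁ := ∑ c, Gfun B μ₁ c
  set Z₂ := ∑ c, Gfun B μ₂ c
  set μ := (s / Z₁) • μ₁ + (t / Z₂) • μ₂ with hμ
  have Gfun_mix : ∀ c, Gfun B μ c = s / Z₁ * Gfun B μ₁ c + t / Z₂ * Gfun B μ₂ c := fun c => by
    rw [hμ, Gfun_add, Gfun_smul, Gfun_smul]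
  have sum_Gfun_mix : ∑ c, Gfun B μ c = 1 := by
    simp only [Gfun_mix, Finset.sum_add_distrib, ← Finset.mul_sum]
    rw [div_mul_cancel₀ s hZ₁.ne', div_mul_cancel₀ t hZ₂.ne', hst]
  have Ffun_mix : s • Ffun B μ₁ + t • Ffun B μ₂ = Ffun B μ := by
    funext c
    simp only [Pi.add_apply, Pi.smul_apply, smul_eq_mul, Ffun]
    rw [sum_Gfun_mix, Gfun_mix]
    ring
  have sum_mix : ∑ σ, μ σ = s / Z₁ + t / Z₂ := by
    simp [hμ, Finset.sum_add_distrib, ← Finset.mul_sum, hμ₁.2, hμ₂.2]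
  rw [Ffun_mix]
  refine Ffun_mem_bpImage (fun σ => ?_) ?_
  · exact add_nonneg (mul_nonneg (by positivity) (hμ₁.1 σ)) (mul_nonneg (by positivity) (hμ₂.1 σ))
  · rw [sum_mix]
    rcases hs.eq_or_lt with rfl | hs
    · rw [zero_add] at hst
      simp [hst, hZ₂]
    · positivity

end BeliefPropagation

section ExtremalFace

variable {k d : ℕ} {W : Matrix (Fin k) (Fin k) ℝ} {r a a₁ a₂ : Fin k}

theorem sum_pow_eq_of_mem_Mset (h₁ : a₁ ∈ Mset d W) (h₂ : a₂ ∈ Mset d W) :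
    ∑ c, W c a₁ ^ d = ∑ c, W c a₂ ^ d :=
  (h₂ a₁).antisymm (h₁ a₂)

theorem column_eq_of_sum_Gfun_eq [NeZero d] {μ : (Fin d → Fin k) → ℝ} (hW : ∀ c j, 0 ≤ W c j)
    (ha : a ∈ Mset d W) (hμ : ∀ σ, 0 ≤ μ σ)
    (h : ∑ c, Gfun W μ c = (∑ c, W c a ^ d) * ∑ σ, μ σ) {σ : Fin d → Fin k} (hσ : μ σ ≠ 0)
    (i j : Fin d) : W.col (σ i) = W.col (σ j) := by
  have col_le : ∀ (τ : Fin d → Fin k) i,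
      ∑ c, W c (τ i) ^ Fintype.card (Fin d) ≤ ∑ c, W c a ^ d := fun τ i => by
    simpa using ha (τ i)
  have term_le : ∀ τ ∈ Finset.univ,
      μ τ * ∑ c, ∏ i, W c (τ i) ≤ μ τ * ∑ c, W c a ^ d := fun τ _ =>
    mul_le_mul_of_nonneg_left
      (sum_prod_le_of_sum_pow_card_le (fun c i => hW c (τ i)) (col_le τ)) (hμ τ)
  rw [sum_Gfun, mul_comm, Finset.sum_mul] at h
  have term_eq := (Finset.sum_eq_sum_iff_of_le term_le).1 h σ (Finset.mem_univ σ)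
  funext c
  exact eq_of_sum_prod_eq_of_sum_pow_card_le (fun c i => hW c (σ i)) (col_le σ)
    (mul_left_cancel₀ hσ term_eq) c i j

theorem Ffun_monochromatic_apply_of_row_eq_one (hr : ∀ j, W r j = 1) (b : Fin k) :
    Ffun W (monochromatic d b) r = (∑ c, W c b ^ d)⁻¹ := by
  simp [Ffun, Gfun_monochromatic, hr]

theorem sum_Gfun_eq_of_Ffun_eq {μ : (Fin d → Fin k) → ℝ} (hr : ∀ j, W r j = 1)
    (hμ : ∑ σ, μ σ ≠ 0) (h : Ffun W μ r = Ffun W (monochromatic d a) r) :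
    ∑ c, Gfun W μ c = (∑ c, W c a ^ d) * ∑ σ, μ σ := by
  rwa [Ffun_monochromatic_apply_of_row_eq_one hr, Ffun, Gfun_of_row_eq_one hr, ← inv_inj, inv_inv,
    inv_div, div_eq_iff hμ] at h

theorem exists_Ffun_eq_monochromatic {ν : Fin d → Fin k → ℝ} (hd : 2 ≤ d)
    (hW : ∀ c j, 0 ≤ W c j) (hr : ∀ j, W r j = 1) (ha : a ∈ Mset d W) (hν : ∀ i j, 0 ≤ ν i j)
    (hsum : ∑ σ, prodMeasure ν σ ≠ 0)
    (h : Ffun W (prodMeasure ν) r = Ffun W (monochromatic d a) r) :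
    ∃ b, Ffun W (prodMeasure ν) = Ffun W (monochromatic d b) := by
  have : NeZero d := ⟨by omega⟩
  have columns_eq : ∀ σ, prodMeasure ν σ ≠ 0 → ∀ i j, W.col (σ i) = W.col (σ j) := fun σ hσ =>
    column_eq_of_sum_Gfun_eq hW ha (fun σ => Finset.prod_nonneg fun i _ => hν i (σ i))
      (sum_Gfun_eq_of_Ffun_eq hr hsum h) hσ
  obtain ⟨τ, -, hτ⟩ := Finset.exists_ne_zero_of_sum_ne_zero hsum
  refine ⟨τ 0, Ffun_eq_of_Gfun_eq_mul hsum fun c => ?_⟩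
  rw [Gfun_monochromatic, Gfun, Finset.sum_mul]
  refine Finset.sum_congr rfl fun σ _ => ?_
  rcases eq_or_ne (prodMeasure ν σ) 0 with hσ | hσ
  · simp [hσ]
  · have entry_eq : ∀ i, W c (σ i) = W c (τ 0) := fun i =>
      congrFun (eq_of_prodMeasure_ne_zero hd columns_eq hσ hτ i 0) c
    simp [entry_eq]

end ExtremalFace

section NormalizedRow

variable {k d : ℕ} {B : Matrix (Fin k) (Fin k) ℝ} {r a a₁ a₂ : Fin k}

/-- The matrix `B` with every column rescaled so that its entry in row `r` is one. It is meant for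
matrices whose row `r` has no zero entry; a column `j` with `B r j = 0` becomes zero. -/
noncomputable def normalizeRow (B : Matrix (Fin k) (Fin k) ℝ) (r : Fin k) :
    Matrix (Fin k) (Fin k) ℝ :=
  Matrix.of fun c j => B c j / B r j

theorem normalizeRow_apply (B : Matrix (Fin k) (Fin k) ℝ) (r c j : Fin k) :
    normalizeRow B r c j = B c j / B r j :=
  rfl

theorem normalizeRow_nonneg (hB : ∀ c j, 0 ≤ B c j) (r c j : Fin k) : 0 ≤ normalizeRow B r c j :=
  div_nonneg (hB c j) (hB r j)

theorem normalizeRow_self (hr : ∀ j, B r j ≠ 0) (j : Fin k) : normalizeRow B r r j = 1 :=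
  div_self (hr j)

theorem Gfun_prodMeasure_eq_normalizeRow (hr : ∀ j, B r j ≠ 0) (ν : Fin d → Fin k → ℝ) (c : Fin k) :
    Gfun B (prodMeasure ν) c =
      Gfun (normalizeRow B r) (prodMeasure fun i j => ν i j * B r j) c := by
  simp only [Gfun_prodMeasure, normalizeRow_apply, mul_assoc, mul_div_cancel₀ _ (hr _)]

theorem Ffun_prodMeasure_eq_normalizeRow (hr : ∀ j, B r j ≠ 0) (ν : Fin d → Fin k → ℝ) :
    Ffun B (prodMeasure ν) = Ffun (normalizeRow B r) (prodMeasure fun i j => ν i j * B r j) := by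
  funext c
  simp only [Ffun, Gfun_prodMeasure_eq_normalizeRow hr]

theorem Ffun_monochromatic_eq_normalizeRow (hr : ∀ j, B r j ≠ 0) (b : Fin k) :
    Ffun B (monochromatic d b) = Ffun (normalizeRow B r) (monochromatic d b) := by
  refine Ffun_eq_of_Gfun_eq_mul (pow_ne_zero d (hr b)) fun c => ?_
  rw [Gfun_monochromatic, Gfun_monochromatic, normalizeRow_apply, ← mul_pow,
    mul_div_cancel₀ _ (hr b)]

theorem Ffun_monochromatic_apply_eq_of_mem_Mset (hr : ∀ j, B r j ≠ 0)
    (h₁ : a₁ ∈ Mset d (normalizeRow B r)) (h₂ : a₂ ∈ Mset d (normalizeRow B r)) :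
    Ffun B (monochromatic d a₁) r = Ffun B (monochromatic d a₂) r := by
  simp only [Ffun_monochromatic_eq_normalizeRow hr,
    Ffun_monochromatic_apply_of_row_eq_one (normalizeRow_self hr), sum_pow_eq_of_mem_Mset h₁ h₂]

theorem Ffun_monochromatic_ne_of_mem_Mset (hd : d ≠ 0) (hB : ∀ c j, 0 ≤ B c j)
    (hr : ∀ j, B r j ≠ 0) (h₁ : a₁ ∈ Mset d (normalizeRow B r))
    (h₂ : a₂ ∈ Mset d (normalizeRow B r)) {c : Fin k}
    (hne : normalizeRow B r c a₁ ≠ normalizeRow B r c a₂) :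
    Ffun B (monochromatic d a₁) ≠ Ffun B (monochromatic d a₂) := by
  intro h
  have hW := normalizeRow_nonneg hB r
  have hsum : ∑ c, normalizeRow B r c a₂ ^ d ≠ 0 := by
    refine (Finset.sum_pos' (fun c _ => pow_nonneg (hW c a₂) d) ⟨r, Finset.mem_univ r, ?_⟩).ne'
    simp [normalizeRow_self hr]
  rw [Ffun_monochromatic_eq_normalizeRow hr, Ffun_monochromatic_eq_normalizeRow hr] at h
  have hc := congrFun h c
  simp only [Ffun, Gfun_monochromatic, sum_pow_eq_of_mem_Mset h₁ h₂] at hc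
  exact hne ((pow_left_inj₀ (hW c a₁) (hW c a₂) hd).1 ((div_left_inj' hsum).1 hc))

theorem bpProdImage_face_subset (hd : 2 ≤ d) (hB : ∀ c j, 0 ≤ B c j) (hr : ∀ j, 0 < B r j)
    (ha : a ∈ Mset d (normalizeRow B r)) :
    bpProdImage d B ∩ {p | p r = Ffun B (monochromatic d a) r} ⊆
      Set.range fun b => Ffun B (monochromatic d b) := by
  have hr₀ : ∀ j, B r j ≠ 0 := fun j => (hr j).ne'
  rintro _ ⟨⟨ν, hν, rfl⟩, hp⟩
  have hsum : ∑ σ, prodMeasure (fun i j => ν i j * B r j) σ ≠ 0 := by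
    rw [← Gfun_of_row_eq_one (normalizeRow_self hr₀), ← Gfun_prodMeasure_eq_normalizeRow hr₀]
    exact (Gfun_pos hr (isProbDist_prodMeasure hν)).ne'
  rw [Set.mem_ofPred_eq, Ffun_prodMeasure_eq_normalizeRow hr₀,
    Ffun_monochromatic_eq_normalizeRow hr₀] at hp
  obtain ⟨b, hb⟩ := exists_Ffun_eq_monochromatic hd (normalizeRow_nonneg hB r)
    (normalizeRow_self hr₀) ha (fun i j => mul_nonneg ((hν i).1 j) (hr j).le) hsum hp
  refine ⟨b, ?_⟩
  simp only [Ffun_monochromatic_eq_normalizeRow hr₀ b, Ffun_prodMeasure_eq_normalizeRow hr₀ ν, hb]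

theorem not_convex_bpProdImage (hd : 2 ≤ d) (hB : ∀ c j, 0 ≤ B c j) (hr : ∀ j, 0 < B r j)
    (h₁ : a₁ ∈ Mset d (normalizeRow B r)) (h₂ : a₂ ∈ Mset d (normalizeRow B r)) {c : Fin k}
    (hne : normalizeRow B r c a₁ ≠ normalizeRow B r c a₂) : ¬ Convex ℝ (bpProdImage d B) := by
  intro hconvex
  have hr₀ : ∀ j, B r j ≠ 0 := fun j => (hr j).ne'
  set face := bpProdImage d B ∩ {p | p r = Ffun B (monochromatic d a₁) r}
  have face_convex : Convex ℝ face :=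
    hconvex.inter (convex_hyperplane (LinearMap.proj r).isLinear _)
  have face_nontrivial : face.Nontrivial :=
    ⟨_, ⟨Ffun_monochromatic_mem_bpProdImage B a₁, rfl⟩,
      _, ⟨Ffun_monochromatic_mem_bpProdImage B a₂,
        Ffun_monochromatic_apply_eq_of_mem_Mset hr₀ h₂ h₁⟩,
      Ffun_monochromatic_ne_of_mem_Mset (by omega) hB hr₀ h₁ h₂ hne⟩
  have face_finite : face.Finite :=
    (Set.finite_range _).subset (bpProdImage_face_subset hd hB hr h₁)
  exact face_convex.isPreconnected.infinite_of_nontrivial face_nontrivial face_finite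

theorem bpProdImage_ssubset_bpImage_of_not_convex (hB : ∀ c j, 0 ≤ B c j) (hr : ∀ j, 0 < B r j)
    (h : ¬ Convex ℝ (bpProdImage d B)) : bpProdImage d B ⊂ bpImage d B :=
  (bpProdImage_subset_bpImage d B).ssubset_of_ne fun heq => h (heq ▸ convex_bpImage d hB hr)

end NormalizedRow

section Bmat

variable {q d : ℕ} {β : ℝ} {A : Matrix (Fin q) (Fin q) ℝ}

theorem Bmat_zero_zero (β : ℝ) (A : Matrix (Fin q) (Fin q) ℝ) : Bmat β A 0 0 = β := by
  simp [Bmat]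

theorem Bmat_zero_succ (β : ℝ) (A : Matrix (Fin q) (Fin q) ℝ) (b : Fin q) :
    Bmat β A 0 b.succ = 1 := by
  simp [Bmat]

theorem Bmat_succ_zero (β : ℝ) (A : Matrix (Fin q) (Fin q) ℝ) (c : Fin q) :
    Bmat β A c.succ 0 = 1 := by
  simp [Bmat]

theorem Bmat_succ_succ (β : ℝ) (A : Matrix (Fin q) (Fin q) ℝ) (c b : Fin q) :
    Bmat β A c.succ b.succ = A c b := by
  simp [Bmat]

theorem Bmat_nonneg (hβ : 0 ≤ β) (hA : ∀ c b, 0 ≤ A c b) (i j : Fin (q + 1)) :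
    0 ≤ Bmat β A i j := by
  cases i using Fin.cases <;> cases j using Fin.cases <;>
    simp [Bmat_zero_zero, Bmat_zero_succ, Bmat_succ_zero, Bmat_succ_succ, hβ, hA]

theorem Bmat_zero_pos (hβ : 0 < β) (A : Matrix (Fin q) (Fin q) ℝ) (j : Fin (q + 1)) :
    0 < Bmat β A 0 j := by
  cases j using Fin.cases <;> simp [Bmat_zero_zero, Bmat_zero_succ, hβ]

theorem normalizeRow_Bmat_succ_succ (β : ℝ) (A : Matrix (Fin q) (Fin q) ℝ) (c b : Fin q) :
    normalizeRow (Bmat β A) 0 c.succ b.succ = A c b := by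
  rw [normalizeRow_apply, Bmat_succ_succ, Bmat_zero_succ, div_one]

theorem sum_normalizeRow_Bmat_zero_pow (hβ : β ≠ 0) :
    ∑ c, normalizeRow (Bmat β A) 0 c 0 ^ d = 1 + q / β ^ d := by
  simp [normalizeRow_apply, Fin.sum_univ_succ, Bmat_zero_zero, Bmat_succ_zero, hβ, div_eq_mul_inv]

theorem sum_normalizeRow_Bmat_succ_pow (b : Fin q) :
    ∑ c, normalizeRow (Bmat β A) 0 c b.succ ^ d = 1 + ∑ c, A c b ^ d := by
  simp [normalizeRow_apply, Fin.sum_univ_succ, Bmat_zero_succ, Bmat_succ_succ]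

theorem succ_mem_Mset_normalizeRow_Bmat (hβ : 0 < β) {a : Fin q} (ha : a ∈ Mset d A)
    (hq : ∃ b, (q : ℝ) ≤ β ^ d * ∑ c, A c b ^ d) :
    a.succ ∈ Mset d (normalizeRow (Bmat β A) 0) := by
  obtain ⟨b, hb⟩ := hq
  intro j
  rw [sum_normalizeRow_Bmat_succ_pow]
  cases j using Fin.cases with
  | zero =>
    rw [sum_normalizeRow_Bmat_zero_pow hβ.ne', add_le_add_iff_left]
    exact ((div_le_iff₀' (by positivity)).2 hb).trans (ha b)
  | succ j =>
    rw [sum_normalizeRow_Bmat_succ_pow, add_le_add_iff_left]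
    exact ha j

theorem natCast_le_pow_mul_sum_pow (hβ : 1 ≤ β) (hA : ∀ c b, 1 ≤ A c b) (b : Fin q) :
    (q : ℝ) ≤ β ^ d * ∑ c, A c b ^ d := by
  calc (q : ℝ) = ∑ _c : Fin q, 1 := by simp
    _ ≤ ∑ c, A c b ^ d := Finset.sum_le_sum fun c _ => one_le_pow₀ (hA c b)
    _ ≤ β ^ d * ∑ c, A c b ^ d :=
      le_mul_of_one_le_left
        (Finset.sum_nonneg fun c _ => pow_nonneg (zero_le_one.trans (hA c b)) d) (one_le_pow₀ hβ)

theorem stmt4_general (hd : 2 ≤ d) (hβ : 0 < β) (hA : ∀ c b, 0 ≤ A c b)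
    (hq : ∃ b, (q : ℝ) ≤ β ^ d * ∑ c, A c b ^ d)
    (hM : ∃ c, ∃ a₁ ∈ Mset d A, ∃ a₂ ∈ Mset d A, A c a₁ ≠ A c a₂) :
    ¬ Convex ℝ (bpProdImage d (Bmat β A)) ∧
      bpProdImage d (Bmat β A) ⊂ bpImage d (Bmat β A) := by
  obtain ⟨c, a₁, h₁, a₂, h₂, hne⟩ := hM
  have hB := Bmat_nonneg hβ.le hA
  have hrow := Bmat_zero_pos hβ A
  have hne' : normalizeRow (Bmat β A) 0 c.succ a₁.succ ≠
      normalizeRow (Bmat β A) 0 c.succ a₂.succ := by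
    simpa only [normalizeRow_Bmat_succ_succ] using hne
  have not_convex := not_convex_bpProdImage hd hB hrow
    (succ_mem_Mset_normalizeRow_Bmat hβ h₁ hq) (succ_mem_Mset_normalizeRow_Bmat hβ h₂ hq) hne'
  exact ⟨not_convex, bpProdImage_ssubset_bpImage_of_not_convex hB hrow not_convex⟩

end Bmat

/-- Nonconvexity of the image of product measures under `F_B`.
Under the standing assumptions on `q, d, β, A`, the set
`𝓕^{prod}_{B,d} = {F_B(ν) : ν product probability measure on ([q] ∪ {c*})^d}`
is not convex, and it is strictly contained in
`𝓕_{B,d} = {F_B(μ) : μ arbitrary probability measure on ([q] ∪ {c*})^d}`. -/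
theorem stmt4 (q d : ℕ) (hq : 3 ≤ q) (hd : 2 ≤ d) (β : ℝ) (hβ : 1 ≤ β)
    (A : Matrix (Fin q) (Fin q) ℝ) (hsymm : A.IsSymm)
    (hge : ∀ c b, (1:ℝ) ≤ A c b) (hstrict : ∃ c b, (1:ℝ) < A c b)
    (hMcard : 2 ≤ (Mset d A).ncard)
    (hMne : ∃ c, ∃ a₁ ∈ Mset d A, ∃ a₂ ∈ Mset d A, A c a₁ ≠ A c a₂) :
    ¬ Convex ℝ {p : Fin (q+1) → ℝ | ∃ ν : Fin d → Fin (q+1) → ℝ,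
        (∀ i, IsProbDist (ν i)) ∧ p = Ffun (Bmat β A) (prodMeasure ν)} ∧
    {p : Fin (q+1) → ℝ | ∃ ν : Fin d → Fin (q+1) → ℝ,
        (∀ i, IsProbDist (ν i)) ∧ p = Ffun (Bmat β A) (prodMeasure ν)} ⊂
      {p : Fin (q+1) → ℝ | ∃ μ : (Fin d → Fin (q+1)) → ℝ,
        IsProbDist μ ∧ p = Ffun (Bmat β A) μ} := by
  exact stmt4_general hd (by linarith) (fun c b => zero_le_one.trans (hge c b))
    (hMne.elim fun _ ⟨a, _⟩ => ⟨a, natCast_le_pow_mul_sum_pow hβ hge a⟩) hMne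
end

section
/- For all integers d ≥ 2 and q ≥ 2, every real β > 1, and every integer 0 ≤ k ≤ q−1, there exists a symmetric interaction matrix A ∈ ℝ_{≥0}^{q×q} satisfying: (a) A ≥ 1_q 1_q^T entrywise with strict inequality in at least one entry; (b) |𝓜(d,A)| ≥ 2 and there exist c ∈ [q] and a₁, a₂ ∈ 𝓜(d,A) with A_{c,a₁} ≠ A_{c,a₂}; such that the symmetric real matrix B(β,A) has exactly k+2 strictly positive eigenvalues and exactly q−k−1 strictly negative eigenvalues (counted with multiplicity). -/
open scoped BigOperators Classical
open MeasureTheory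

/-!
Let `M` be the adjacency matrix of the graph on `[q]` made of a loopless clique on a set `S` and a
loop at each vertex outside `S`, and put `A = 1 1ᵀ + M`. Completing the square,
`xᵀ B(β, A) x = (β - 1) x₀² + (x₀ + ∑ yᵢ)² + yᵀ M y` for `x = (x₀, y)`, and
`yᵀ M y = (∑_S yᵢ)² - ∑_S yᵢ² + ∑_{Sᶜ} yᵢ²`. If `|S| ≠ 1`, the form of `B(β, A)` is positive
definite on the vectors that are constant on `S` and negative definite on those supported on `S`
with sum zero. These two spaces span everything and the second has dimension `|S| - 1`, so
Sylvester's law of inertia gives the signature; taking `|S| = q - k`, or `S = ∅` when `k = q - 1`,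
makes it the desired one. Since `A` has entries `1` and `2`, its `d`-th power column sums are
ordered like the vertex degrees of the graph, hence are maximal on `S` (everywhere if `S = ∅`), for
every `d`.
-/

section Signature

open Matrix QuadraticMap

theorem toQuadraticForm'_apply {R n : Type*} [CommRing R] [Fintype n] [DecidableEq n]
    (M : Matrix n n R) (x : n → R) : M.toQuadraticForm' x = x ⬝ᵥ M *ᵥ x := by
  simp [toQuadraticForm', toLinearMap₂'_apply']

section Eigenvalues

variable {n : Type*} [Fintype n] [DecidableEq n] {M : Matrix n n ℝ}

theorem toQuadraticForm'_equivalent_weightedSumSquares_eigenvalues (hM : M.IsHermitian) :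
    Equivalent M.toQuadraticForm' (weightedSumSquares ℝ hM.eigenvalues) := by
  let U : Matrix n n ℝ := hM.eigenvectorUnitary
  have spectral : M = U * diagonal hM.eigenvalues * Uᵀ := by
    simpa [U, Unitary.conjStarAlgAut_apply, star_eq_conjTranspose] using! hM.spectral_theorem
  refine ⟨⟨UnitaryGroup.toLinearEquiv (star hM.eigenvectorUnitary), fun x ↦ ?_⟩⟩
  change weightedSumSquares ℝ hM.eigenvalues (Uᵀ *ᵥ x) = M.toQuadraticForm' x
  calc weightedSumSquares ℝ hM.eigenvalues (Uᵀ *ᵥ x)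
      = (Uᵀ *ᵥ x) ⬝ᵥ diagonal hM.eigenvalues *ᵥ (Uᵀ *ᵥ x) := by
        simp [dotProduct, mulVec_diagonal, mul_left_comm]
    _ = x ⬝ᵥ (U * diagonal hM.eigenvalues * Uᵀ) *ᵥ x := by
        rw [← mulVec_mulVec, ← mulVec_mulVec, dotProduct_mulVec x, mulVec_transpose]
    _ = M.toQuadraticForm' x := by rw [← spectral, toQuadraticForm'_apply]

theorem card_eigenvalues_pos_eq_sigPos (hM : M.IsHermitian) :
    (Finset.univ.filter fun i ↦ 0 < hM.eigenvalues i).card = sigPos M.toQuadraticForm' := by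
  rw [QuadraticForm.sigPos_of_equiv_weightedSumSquares
    (toQuadraticForm'_equivalent_weightedSumSquares_eigenvalues hM), ← Set.ncard_coe_finset]
  simp

theorem card_eigenvalues_neg_eq_sigNeg (hM : M.IsHermitian) :
    (Finset.univ.filter fun i ↦ hM.eigenvalues i < 0).card = sigNeg M.toQuadraticForm' := by
  rw [QuadraticForm.sigNeg_of_equiv_weightedSumSquares
    (toQuadraticForm'_equivalent_weightedSumSquares_eigenvalues hM), ← Set.ncard_coe_finset]
  simp

end Eigenvalues

theorem sigPos_eq_and_sigNeg_eq_of_codisjoint {K V : Type*} [Field K] [LinearOrder K]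
    [IsStrictOrderedRing K] [AddCommGroup V] [Module K V] [FiniteDimensional K V]
    {Q : QuadraticForm K V} {P N : Submodule K V} (hPN : Codisjoint P N)
    (hP : (Q.restrict P).PosDef) (hN : ((-Q).restrict N).PosDef) :
    sigPos Q = Module.finrank K V - Module.finrank K N ∧ sigNeg Q = Module.finrank K N := by
  have pos_ge := le_sigPos_of_posDef Q hP
  have neg_ge := le_sigNeg_of_negDef Q hN
  have sum_le := QuadraticForm.sigPos_add_sigNeg_add_radical (Q := Q)
  have spans := Submodule.finrank_add_le_finrank_add_finrank P N
  rw [hPN.eq_top, finrank_top] at spans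
  lia

end Signature

section ConstantAndSumZero

variable {ι : Type*}

section Semiring

variable (R : Type*) [CommSemiring R] (T : Finset ι)

/-- The functions `ι → R` that are constant on `T`, with no constraint outside `T`: the positive
definite subspace of the signature computation. -/
def constOn : Submodule R (ι → R) where
  carrier := {x | ∀ i ∈ T, ∀ j ∈ T, x i = x j}
  zero_mem' := fun _ _ _ _ ↦ rfl
  add_mem' hx hy i hi j hj := congrArg₂ (· + ·) (hx i hi j hj) (hy i hi j hj)
  smul_mem' c _ hx i hi j hj := congrArg (c * ·) (hx i hi j hj)

/-- The functions `ι → R` that vanish outside `T` and whose values on `T` add up to zero: the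
negative definite subspace of the signature computation. -/
def sumZeroOn : Submodule R (ι → R) where
  carrier := {x | (∀ i ∉ T, x i = 0) ∧ ∑ i ∈ T, x i = 0}
  zero_mem' := by simp
  add_mem' hx hy :=
    ⟨fun i hi ↦ by simp [hx.1 i hi, hy.1 i hi], by simp [Finset.sum_add_distrib, hx.2, hy.2]⟩
  smul_mem' c _ hx := ⟨fun i hi ↦ by simp [hx.1 i hi], by simp [← Finset.mul_sum, hx.2]⟩

variable {R T}

theorem comp_mem_constOn_of_mem_map {κ : Type*} {S : Finset κ} {f : κ ↪ ι} {x : ι → R}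
    (hx : x ∈ constOn R (S.map f)) : x ∘ f ∈ constOn R S := fun i hi j hj ↦
  hx (f i) (Finset.mem_map_of_mem f hi) (f j) (Finset.mem_map_of_mem f hj)

theorem comp_mem_sumZeroOn_of_mem_map {κ : Type*} {S : Finset κ} {f : κ ↪ ι} {x : ι → R}
    (hx : x ∈ sumZeroOn R (S.map f)) : x ∘ f ∈ sumZeroOn R S :=
  ⟨fun i hi ↦ hx.1 (f i) (by simpa using hi), by simpa [Finset.sum_map] using hx.2⟩

theorem sum_eq_zero_of_mem_sumZeroOn [Fintype ι] {x : ι → R} (hx : x ∈ sumZeroOn R T) :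
    ∑ i, x i = 0 := by
  rw [← Finset.sum_subset T.subset_univ fun i _ hi ↦ hx.1 i hi, hx.2]

theorem sq_sum_of_mem_constOn {x : ι → R} (hx : x ∈ constOn R T) :
    (∑ i ∈ T, x i) ^ 2 = T.card * ∑ i ∈ T, x i ^ 2 := by
  have row : ∀ i ∈ T, ∑ j ∈ T, x i * x j = T.card * x i ^ 2 := fun i hi ↦ by
    rw [Finset.sum_congr rfl fun j hj ↦ by rw [hx j hj i hi, ← sq], Finset.sum_const,
      nsmul_eq_mul]
  rw [sq, Finset.sum_mul_sum, Finset.sum_congr rfl row, Finset.mul_sum]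

end Semiring

variable (K : Type*) [Field K] (T : Finset ι)

theorem codisjoint_constOn_sumZeroOn [CharZero K] : Codisjoint (constOn K T) (sumZeroOn K T) := by
  classical
  rw [codisjoint_iff, Submodule.eq_top_iff']
  intro x
  let mean : K := (∑ i ∈ T, x i) / T.card
  let y : ι → K := fun i ↦ if i ∈ T then x i - mean else 0
  have sum_eq : T.card * mean = ∑ i ∈ T, x i :=
    mul_div_cancel_of_imp' fun h ↦ by simp_all
  have hy : y ∈ sumZeroOn K T := by
    refine ⟨fun i hi ↦ if_neg hi, ?_⟩
    rw [Finset.sum_congr rfl fun i hi ↦ if_pos hi, Finset.sum_sub_distrib, Finset.sum_const,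
      nsmul_eq_mul, sum_eq, sub_self]
  have hxy : x - y ∈ constOn K T := fun i hi j hj ↦ by simp [y, hi, hj]
  exact Submodule.mem_sup.2 ⟨x - y, hxy, y, hy, sub_add_cancel x y⟩

theorem finrank_ker_sum_proj (κ : Type*) [Fintype κ] :
    Module.finrank K (LinearMap.ker (∑ i : κ, LinearMap.proj i : (κ → K) →ₗ[K] K)) =
      Fintype.card κ - 1 := by
  rcases isEmpty_or_nonempty κ with _ | ⟨⟨i⟩⟩
  · exact Module.finrank_zero_of_subsingleton.trans (by simp)
  · classical
    have sum_ne_zero : (∑ i : κ, LinearMap.proj i : (κ → K) →ₗ[K] K) ≠ 0 := fun h ↦ by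
      simpa using LinearMap.congr_fun h (Pi.single i 1)
    have := Module.Dual.finrank_ker_add_one_of_ne_zero sum_ne_zero
    rw [Module.finrank_fintype_fun_eq_card] at this
    lia

theorem finrank_sumZeroOn : Module.finrank K (sumZeroOn K T) = T.card - 1 := by
  classical
  have restrict_mem (x : sumZeroOn K T) : LinearMap.funLeft K K ((↑) : T → ι) x ∈
      LinearMap.ker (∑ i : T, LinearMap.proj i : (T → K) →ₗ[K] K) := by
    simpa [LinearMap.funLeft_apply, Finset.sum_attach T x.1] using x.2.2
  let restrict := ((LinearMap.funLeft K K ((↑) : T → ι)).domRestrict (sumZeroOn K T)).codRestrict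
    (LinearMap.ker (∑ i : T, LinearMap.proj i : (T → K) →ₗ[K] K)) restrict_mem
  have injective : Function.Injective restrict := by
    refine (injective_iff_map_eq_zero _).2 fun x hx ↦ Subtype.ext (funext fun i ↦ ?_)
    by_cases hi : i ∈ T
    · exact congrFun (congrArg Subtype.val hx) ⟨i, hi⟩
    · exact x.2.1 i hi
  have surjective : Function.Surjective restrict := by
    intro y
    refine ⟨⟨fun i ↦ if hi : i ∈ T then y.1 ⟨i, hi⟩ else 0, fun i hi ↦ dif_neg hi, ?_⟩, ?_⟩
    · rw [← Finset.sum_coe_sort]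
      simpa using y.2
    · exact Subtype.ext (funext fun i ↦ dif_pos i.2)
  rw [(LinearEquiv.ofBijective restrict ⟨injective, surjective⟩).finrank_eq,
    finrank_ker_sum_proj, Fintype.card_coe]

end ConstantAndSumZero

section CliqueLoopMatrix

open Matrix

variable {ι : Type*} [DecidableEq ι]

/-- The adjacency matrix of the graph on `ι` consisting of a loopless clique on `S` and one loop at
every vertex outside `S`. Its quadratic form has negative index `|S| - 1` when `S` is nonempty. -/
def cliqueLoopMatrix (R : Type*) [Zero R] [One R] (S : Finset ι) : Matrix ι ι R :=
  of fun i j ↦ if i = j then (if i ∈ S then 0 else 1) else (if i ∈ S ∧ j ∈ S then 1 else 0)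

theorem cliqueLoopMatrix_apply_eq_zero_or_one {R : Type*} [Zero R] [One R] (S : Finset ι)
    (i j : ι) : cliqueLoopMatrix R S i j = 0 ∨ cliqueLoopMatrix R S i j = 1 := by
  simp only [cliqueLoopMatrix, of_apply]
  split_ifs <;> simp

theorem isSymm_cliqueLoopMatrix {R : Type*} [Zero R] [One R] (S : Finset ι) :
    (cliqueLoopMatrix R S).IsSymm := by
  refine IsSymm.ext fun i j ↦ ?_
  rcases eq_or_ne i j with rfl | hij
  · rfl
  · simp [cliqueLoopMatrix, hij, hij.symm, and_comm]

theorem cliqueLoopMatrix_apply_self_ne {R : Type*} [Zero R] [One R] [NeZero (1 : R)]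
    {S : Finset ι} {a b : ι} (hab : a ≠ b) (h : a ∈ S ↔ b ∈ S) :
    cliqueLoopMatrix R S a a ≠ cliqueLoopMatrix R S a b := by
  by_cases ha : a ∈ S <;> simp [cliqueLoopMatrix, hab, ha, ← h]

section Form

variable {R : Type*} [CommRing R] [Fintype ι] (S : Finset ι)

theorem cliqueLoopMatrix_mulVec_apply (x : ι → R) (i : ι) :
    (cliqueLoopMatrix R S *ᵥ x) i = if i ∈ S then ∑ j ∈ S, x j - x i else x i := by
  have entry (j : ι) : cliqueLoopMatrix R S i j * x j =
      (if i ∈ S then if j ∈ S then x j else 0 else 0) +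
        if i = j then if i ∈ S then -x j else x j else 0 := by
    rcases eq_or_ne i j with rfl | hij
    · by_cases hi : i ∈ S <;> simp [cliqueLoopMatrix, hi]
    · by_cases hi : i ∈ S <;> simp [cliqueLoopMatrix, hi, hij]
  simp only [mulVec, dotProduct, entry, Finset.sum_add_distrib]
  by_cases hi : i ∈ S <;> simp [hi, sub_eq_add_neg]

theorem dotProduct_cliqueLoopMatrix_mulVec (x : ι → R) :
    x ⬝ᵥ cliqueLoopMatrix R S *ᵥ x =
      (∑ i ∈ S, x i) ^ 2 - ∑ i ∈ S, x i ^ 2 + ∑ i ∈ Sᶜ, x i ^ 2 := by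
  rw [dotProduct, ← Finset.sum_add_sum_compl S]
  congr 1
  · rw [sq, Finset.sum_mul, ← Finset.sum_sub_distrib]
    refine Finset.sum_congr rfl fun i hi ↦ ?_
    rw [cliqueLoopMatrix_mulVec_apply, if_pos hi]
    ring
  · refine Finset.sum_congr rfl fun i hi ↦ ?_
    rw [cliqueLoopMatrix_mulVec_apply, if_neg (Finset.mem_compl.1 hi), sq]

theorem sum_cliqueLoopMatrix_apply (b : ι) :
    ∑ c, cliqueLoopMatrix R S c b = if b ∈ S then (S.card : R) - 1 else 1 := by
  have := cliqueLoopMatrix_mulVec_apply (R := R) S 1 b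
  simpa [mulVec, dotProduct, (isSymm_cliqueLoopMatrix S).apply] using this

variable {S}
variable {K : Type*} [Field K] [LinearOrder K] [IsStrictOrderedRing K]

theorem dotProduct_cliqueLoopMatrix_mulVec_pos (hS : S.card ≠ 1) {x : ι → K}
    (hx : x ∈ constOn K S) (hx₀ : x ≠ 0) : 0 < x ⬝ᵥ cliqueLoopMatrix K S *ᵥ x := by
  have form_eq : x ⬝ᵥ cliqueLoopMatrix K S *ᵥ x =
      ∑ i ∈ S, ((S.card : K) - 1) * x i ^ 2 + ∑ i ∈ Sᶜ, x i ^ 2 := by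
    rw [dotProduct_cliqueLoopMatrix_mulVec, sq_sum_of_mem_constOn hx, ← Finset.mul_sum]
    ring
  have card_sub_one_pos {i : ι} (hi : i ∈ S) : 0 < (S.card : K) - 1 := by
    have : 1 < S.card := by have := Finset.card_pos.2 ⟨i, hi⟩; lia
    simpa using this
  have on_nonneg : ∀ i ∈ S, 0 ≤ ((S.card : K) - 1) * x i ^ 2 := fun i hi ↦
    mul_nonneg (card_sub_one_pos hi).le (sq_nonneg _)
  have off_nonneg : ∀ i ∈ Sᶜ, 0 ≤ x i ^ 2 := fun i _ ↦ sq_nonneg _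
  obtain ⟨i, hi⟩ := Function.ne_iff.1 hx₀
  have sq_pos : 0 < x i ^ 2 := even_two.pow_pos hi
  rw [form_eq]
  by_cases his : i ∈ S
  · exact add_pos_of_pos_of_nonneg
      (Finset.sum_pos' on_nonneg ⟨i, his, mul_pos (card_sub_one_pos his) sq_pos⟩)
      (Finset.sum_nonneg off_nonneg)
  · exact add_pos_of_nonneg_of_pos (Finset.sum_nonneg on_nonneg)
      (Finset.sum_pos' off_nonneg ⟨i, Finset.mem_compl.2 his, sq_pos⟩)

theorem dotProduct_cliqueLoopMatrix_mulVec_neg {x : ι → K} (hx : x ∈ sumZeroOn K S)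
    (hx₀ : x ≠ 0) : x ⬝ᵥ cliqueLoopMatrix K S *ᵥ x < 0 := by
  obtain ⟨i, hi⟩ := Function.ne_iff.1 hx₀
  have his : i ∈ S := by_contra fun h ↦ hi (hx.1 i h)
  have off_eq_zero : ∑ i ∈ Sᶜ, x i ^ 2 = 0 :=
    Finset.sum_eq_zero fun i hi ↦ by simp [hx.1 i (Finset.mem_compl.1 hi)]
  have on_pos : 0 < ∑ i ∈ S, x i ^ 2 :=
    Finset.sum_pos' (fun i _ ↦ sq_nonneg _) ⟨i, his, even_two.pow_pos hi⟩
  rw [dotProduct_cliqueLoopMatrix_mulVec, hx.2, off_eq_zero]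
  linarith

end Form

end CliqueLoopMatrix

section Interaction

open Matrix

variable {ι : Type*} [DecidableEq ι]

/-- The all-ones matrix plus the adjacency matrix `cliqueLoopMatrix ℝ S`: the interaction matrix
that realizes the prescribed signature. -/
def cliqueLoopInteraction (S : Finset ι) : Matrix ι ι ℝ :=
  of (fun _ _ ↦ 1) + cliqueLoopMatrix ℝ S

theorem isSymm_cliqueLoopInteraction (S : Finset ι) : (cliqueLoopInteraction S).IsSymm :=
  IsSymm.add rfl (isSymm_cliqueLoopMatrix S)

theorem one_le_cliqueLoopInteraction_apply (S : Finset ι) (c b : ι) :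
    1 ≤ cliqueLoopInteraction S c b := by
  rcases cliqueLoopMatrix_apply_eq_zero_or_one (R := ℝ) S c b with h | h <;>
    simp [cliqueLoopInteraction, h]

theorem cliqueLoopInteraction_apply_self_ne {S : Finset ι} {a b : ι} (hab : a ≠ b)
    (h : a ∈ S ↔ b ∈ S) : cliqueLoopInteraction S a a ≠ cliqueLoopInteraction S a b := by
  simpa [cliqueLoopInteraction] using cliqueLoopMatrix_apply_self_ne hab h

end Interaction

section BlockMatrix

open Matrix

variable {q : ℕ}

theorem isHermitian_Bmat {A : Matrix (Fin q) (Fin q) ℝ} (β : ℝ) (hA : A.IsSymm) :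
    (Bmat β A).IsHermitian := by
  refine IsHermitian.ext fun i j ↦ ?_
  simp only [Bmat, of_apply, star_trivial]
  split_ifs <;> first | rfl | exact hA.apply _ _

theorem dotProduct_Bmat_mulVec (β : ℝ) (A : Matrix (Fin q) (Fin q) ℝ) (x : Fin (q + 1) → ℝ) :
    x ⬝ᵥ Bmat β A *ᵥ x =
      β * x 0 ^ 2 + 2 * x 0 * ∑ i, Fin.tail x i + Fin.tail x ⬝ᵥ A *ᵥ Fin.tail x := by
  simp only [dotProduct, mulVec, Fin.sum_univ_succ, Bmat, of_apply, Fin.succ_ne_zero, dite_true,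
    dite_false, if_true, if_false, Fin.pred_succ, one_mul, mul_add, Finset.sum_add_distrib,
    Fin.tail, ← Finset.sum_mul]
  ring

theorem dotProduct_Bmat_one_add_mulVec (β : ℝ) (M : Matrix (Fin q) (Fin q) ℝ)
    (x : Fin (q + 1) → ℝ) :
    x ⬝ᵥ Bmat β (of (fun _ _ ↦ 1) + M) *ᵥ x =
      (β - 1) * x 0 ^ 2 + (x 0 + ∑ i, Fin.tail x i) ^ 2 + Fin.tail x ⬝ᵥ M *ᵥ Fin.tail x := by
  have ones_form : Fin.tail x ⬝ᵥ (of fun _ _ ↦ 1) *ᵥ Fin.tail x = (∑ i, Fin.tail x i) ^ 2 := by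
    simp [dotProduct, mulVec, ← Finset.sum_mul, sq]
  rw [dotProduct_Bmat_mulVec, add_mulVec, dotProduct_add, ones_form]
  ring

theorem dotProduct_Bmat_one_add_mulVec_pos {β : ℝ} (hβ : 1 ≤ β) {M : Matrix (Fin q) (Fin q) ℝ}
    {x : Fin (q + 1) → ℝ} (hx : x ≠ 0)
    (hM : Fin.tail x ≠ 0 → 0 < Fin.tail x ⬝ᵥ M *ᵥ Fin.tail x) :
    0 < x ⬝ᵥ Bmat β (of (fun _ _ ↦ 1) + M) *ᵥ x := by
  rw [dotProduct_Bmat_one_add_mulVec]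
  have head_nonneg : 0 ≤ (β - 1) * x 0 ^ 2 := mul_nonneg (sub_nonneg.2 hβ) (sq_nonneg _)
  by_cases tail_eq : Fin.tail x = 0
  · have head_ne : x 0 ≠ 0 := fun h ↦ hx (funext (Fin.cases h (congrFun tail_eq)))
    have : 0 < x 0 ^ 2 := even_two.pow_pos head_ne
    simpa [tail_eq] using add_pos_of_nonneg_of_pos head_nonneg this
  · have := hM tail_eq
    positivity

variable {S : Finset (Fin q)}

theorem posDef_restrict_constOn_Bmat_cliqueLoopInteraction {β : ℝ} (hβ : 1 ≤ β) (hS : S.card ≠ 1) :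
    ((Bmat β (cliqueLoopInteraction S)).toQuadraticForm'.restrict
      (constOn ℝ (S.map (Fin.succEmb q)))).PosDef := by
  rintro ⟨x, hx⟩ hx₀
  rw [QuadraticMap.restrict_apply, toQuadraticForm'_apply]
  exact dotProduct_Bmat_one_add_mulVec_pos hβ (fun h ↦ hx₀ (Subtype.ext h)) fun tail_ne ↦
    dotProduct_cliqueLoopMatrix_mulVec_pos hS (comp_mem_constOn_of_mem_map hx) tail_ne

theorem negDef_restrict_sumZeroOn_Bmat_cliqueLoopInteraction (β : ℝ) :
    ((-(Bmat β (cliqueLoopInteraction S)).toQuadraticForm').restrict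
      (sumZeroOn ℝ (S.map (Fin.succEmb q)))).PosDef := by
  rintro ⟨x, hx⟩ hx₀
  have head_eq : x 0 = 0 := hx.1 0 (by simp)
  have tail_mem : Fin.tail x ∈ sumZeroOn ℝ S := comp_mem_sumZeroOn_of_mem_map hx
  have tail_ne : Fin.tail x ≠ 0 := fun h ↦
    hx₀ (Subtype.ext (funext (Fin.cases head_eq (congrFun h))))
  have form_eq : x ⬝ᵥ Bmat β (cliqueLoopInteraction S) *ᵥ x =
      Fin.tail x ⬝ᵥ cliqueLoopMatrix ℝ S *ᵥ Fin.tail x := by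
    simp [cliqueLoopInteraction, dotProduct_Bmat_one_add_mulVec, head_eq,
      sum_eq_zero_of_mem_sumZeroOn tail_mem]
  rw [QuadraticMap.restrict_apply, _root_.neg_apply, toQuadraticForm'_apply, form_eq, neg_pos]
  exact dotProduct_cliqueLoopMatrix_mulVec_neg tail_mem tail_ne

theorem card_eigenvalues_Bmat_cliqueLoopInteraction {β : ℝ} (hβ : 1 ≤ β) (hS : S.card ≠ 1)
    (hB : (Bmat β (cliqueLoopInteraction S)).IsHermitian) :
    (Finset.univ.filter fun i ↦ 0 < hB.eigenvalues i).card = q + 1 - (S.card - 1) ∧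
      (Finset.univ.filter fun i ↦ hB.eigenvalues i < 0).card = S.card - 1 := by
  rw [card_eigenvalues_pos_eq_sigPos, card_eigenvalues_neg_eq_sigNeg]
  simpa [finrank_sumZeroOn] using sigPos_eq_and_sigNeg_eq_of_codisjoint
    (codisjoint_constOn_sumZeroOn ℝ _) (posDef_restrict_constOn_Bmat_cliqueLoopInteraction hβ hS)
    (negDef_restrict_sumZeroOn_Bmat_cliqueLoopInteraction β)

end BlockMatrix

section Maximizers

open Matrix

variable {q : ℕ}

theorem mem_Mset_one_add {M : Matrix (Fin q) (Fin q) ℝ} (hM : ∀ c b, M c b = 0 ∨ M c b = 1)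
    {b : Fin q} (hb : ∀ b', ∑ c, M c b' ≤ ∑ c, M c b) (d : ℕ) :
    b ∈ Mset d (of (fun _ _ ↦ 1) + M) := by
  have pow_eq (c b' : Fin q) : (1 + M c b') ^ d = 1 + (2 ^ d - 1) * M c b' := by
    rcases hM c b' with h | h <;> rw [h] <;> norm_num
  have two_pow_ge : (0 : ℝ) ≤ 2 ^ d - 1 := sub_nonneg.2 (one_le_pow₀ one_le_two)
  intro b'
  simp only [Matrix.add_apply, of_apply, pow_eq, Finset.sum_add_distrib, ← Finset.mul_sum]
  exact add_le_add_right (mul_le_mul_of_nonneg_left (hb b') two_pow_ge) _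

variable {S : Finset (Fin q)}

theorem exists_ne_mem_Mset_cliqueLoopInteraction (hq : 2 ≤ q) (hS : S.card ≠ 1) (d : ℕ) :
    ∃ a ∈ Mset d (cliqueLoopInteraction S), ∃ b ∈ Mset d (cliqueLoopInteraction S),
      a ≠ b ∧ (a ∈ S ↔ b ∈ S) := by
  have mem_Mset {a : Fin q} (ha : ∀ b, ∑ c, cliqueLoopMatrix ℝ S c b ≤
      ∑ c, cliqueLoopMatrix ℝ S c a) : a ∈ Mset d (cliqueLoopInteraction S) :=
    mem_Mset_one_add (cliqueLoopMatrix_apply_eq_zero_or_one S) ha d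
  rcases S.eq_empty_or_nonempty with rfl | nonempty
  · have all_mem (a : Fin q) : a ∈ Mset d (cliqueLoopInteraction ∅) :=
      mem_Mset fun b ↦ by simp [sum_cliqueLoopMatrix_apply]
    exact ⟨⟨0, by lia⟩, all_mem _, ⟨1, by lia⟩, all_mem _, by simp, by simp⟩
  · have one_lt : 1 < S.card := by have := nonempty.card_pos; lia
    have two_le : (2 : ℝ) ≤ S.card := mod_cast one_lt
    have clique_mem {a : Fin q} (ha : a ∈ S) : a ∈ Mset d (cliqueLoopInteraction S) :=
      mem_Mset fun b ↦ by
        rw [sum_cliqueLoopMatrix_apply, sum_cliqueLoopMatrix_apply, if_pos ha]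
        split_ifs <;> linarith
    obtain ⟨a, ha, b, hb, hab⟩ := Finset.one_lt_card.1 one_lt
    exact ⟨a, clique_mem ha, b, clique_mem hb, hab, by simp [ha, hb]⟩

end Maximizers

theorem exists_finset_card_ne_one_card_sub_one_eq {q k : ℕ} (hk : k < q) :
    ∃ S : Finset (Fin q), S.card ≠ 1 ∧ S.card - 1 = q - k - 1 := by
  by_cases h : k + 1 = q
  · exact ⟨∅, by simp, by simp; lia⟩
  · obtain ⟨S, -, card_eq⟩ := Finset.exists_subset_card_eq
      (show q - k ≤ (Finset.univ : Finset (Fin q)).card by simp)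
    exact ⟨S, by lia, by lia⟩

theorem stmt12_general (q : ℕ) (hq : 2 ≤ q) (k : ℕ) (hk : k < q) :
    ∃ A : Matrix (Fin q) (Fin q) ℝ, A.IsSymm ∧
      (∀ c b, (1 : ℝ) ≤ A c b) ∧ (∃ c b, (1 : ℝ) < A c b) ∧
      (∀ d : ℕ, 2 ≤ (Mset d A).ncard ∧
        ∃ c, ∃ a₁ ∈ Mset d A, ∃ a₂ ∈ Mset d A, A c a₁ ≠ A c a₂) ∧
      ∀ β : ℝ, 1 ≤ β → ∃ hB : (Bmat β A).IsHermitian,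
        (Finset.univ.filter (fun i => 0 < hB.eigenvalues i)).card = k + 2 ∧
        (Finset.univ.filter (fun i => hB.eigenvalues i < 0)).card = q - k - 1 := by
  obtain ⟨S, hS, card_eq⟩ := exists_finset_card_ne_one_card_sub_one_eq hk
  have symm := isSymm_cliqueLoopInteraction S
  have columns (d : ℕ) := exists_ne_mem_Mset_cliqueLoopInteraction hq hS d
  refine ⟨cliqueLoopInteraction S, symm, one_le_cliqueLoopInteraction_apply S, ?_, fun d ↦ ?_,
    fun β hβ ↦ ⟨isHermitian_Bmat β symm, ?_⟩⟩
  · obtain ⟨a, -, b, -, hab, mem_iff⟩ := columns 0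
    exact (cliqueLoopInteraction_apply_self_ne hab mem_iff).lt_or_gt.elim
      (fun h ↦ ⟨a, b, (one_le_cliqueLoopInteraction_apply S a a).trans_lt h⟩)
      (fun h ↦ ⟨a, a, (one_le_cliqueLoopInteraction_apply S a b).trans_lt h⟩)
  · obtain ⟨a, ha, b, hb, hab, mem_iff⟩ := columns d
    exact ⟨(Set.one_lt_ncard_iff (Set.toFinite _)).2 ⟨a, b, ha, hb, hab⟩,
      a, a, ha, b, hb, cliqueLoopInteraction_apply_self_ne hab mem_iff⟩
  · have := card_eigenvalues_Bmat_cliqueLoopInteraction hβ hS (isHermitian_Bmat β symm)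
    lia

/-- Proposition: all non-antiferromagnetic signatures occur.
For all `d ≥ 2`, `q ≥ 2`, `β > 1` and `0 ≤ k ≤ q-1`, there is a symmetric
interaction matrix `A` satisfying the hypotheses of the main theorem
(`A ≥ 1 1ᵀ` entrywise, strictly somewhere; `|𝓜(d,A)| ≥ 2`; and
`A c a₁ ≠ A c a₂` for some `c` and `a₁, a₂ ∈ 𝓜(d,A)`) such that `B(β,A)`
has exactly `k+2` strictly positive and exactly `q-k-1` strictly negative
eigenvalues (counted with multiplicity). -/
theorem stmt12 (q d : ℕ) (hq : 2 ≤ q) (hd : 2 ≤ d) (β : ℝ) (hβ : 1 < β)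
    (k : ℕ) (hk : k ≤ q - 1) :
    ∃ A : Matrix (Fin q) (Fin q) ℝ, A.IsSymm ∧
      (∀ c b, (1:ℝ) ≤ A c b) ∧ (∃ c b, (1:ℝ) < A c b) ∧
      2 ≤ (Mset d A).ncard ∧
      (∃ c, ∃ a₁ ∈ Mset d A, ∃ a₂ ∈ Mset d A, A c a₁ ≠ A c a₂) ∧
      ∃ hB : (Bmat β A).IsHermitian,
        (Finset.univ.filter (fun i => 0 < hB.eigenvalues i)).card = k + 2 ∧
        (Finset.univ.filter (fun i => hB.eigenvalues i < 0)).card = q - k - 1 := by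
  obtain ⟨A, symm, one_le, one_lt, columns, signature⟩ := stmt12_general q hq k (by lia)
  exact ⟨A, symm, one_le, one_lt, (columns d).1, (columns d).2, signature β hβ.le⟩
end
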